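/- Let (Y, d) be a metric space equipped with a measure μ, let y_C ∈ Y, let Y_C ⊆ Y be a measurable set, let X be a set of prompts, let p : X × Y → ℝ be measurable in y with p(x, ·) ≥ 0 and ∫_Y p(x, y) dμ(y) = 1 for every x ∈ X, let ρ : X × Y → ℝ be measurable in y, and let k : X → ℝ. Fix η > 0, δ > 0 and define X̃ = {x ∈ X : p(x, y_C) ≥ η and ρ(x, y_C) < k(x) − δ}. Assume: (i) there exist ε_p > 0 and α > 0 such that for every x ∈ X and every y with d(y_C, y) < ε_p, |p(x, y_C) − p(x, y)| ≤ α · d(y_C, y); (ii) there exist ε̃ > 0 and β > 0 such that for every x ∈ X and every y with d(y_C, y) < ε̃, |ρ(x, y_C) − ρ(x, y)| ≤ β · d(y_C, y); (iii) there exists ε_c > 0 with {y : d(y_C, y) < ε_c} ⊆ Y_C. Set ε = min(ε_p, ε_c, ε̃, δ/β), and let B = {y : d(y_C, y) < ε}, C₁ = μ(B), C₂ = ∫_B d(y_C, y) dμ(y), assuming C₁ < ∞ and C₂ < ∞. Then for every x ∈ X̃ with ∫_Y 1_{ρ(x,y) < k(x)} p(x, y) dμ(y) > 0, the conditional probability (∫_Y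 1_{y ∈ Y_C} · 1_{ρ(x,y) < k(x)} · p(x, y) dμ(y)) / (∫_Y 1_{ρ(x,y) < k(x)} p(x, y) dμ(y)) ≥ η C₁ − α C₂. In particular sup_{x ∈ X} of this conditional probability is at least sup_{x ∈ X̃} (η C₁ − α C₂). -/

import Mathlib

open MeasureTheory

/-!
The Lipschitz bound on the score keeps the whole ball of radius `min ε_t (δ / β)` inside the
acceptance event, and that on the density keeps `p` above `η - α * dist y_C ·` there. Integrating
bounds the accepted infringing mass below by `η * C₁ - α * C₂`, and conditioning on an event of
mass at most one can only increase it.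
-/

section ConditionedProb

variable {Y : Type*} [MeasurableSpace Y] {μ : Measure Y} {f : Y → ℝ} {A S T : Set Y}

/-- The probability of `S` under the model with density `f` with respect to `μ`, conditioned on
the acceptance event `A`. It is `0` by convention when `A` has mass zero. -/
noncomputable def conditionedProb (μ : Measure Y) (f : Y → ℝ) (A S : Set Y) : ℝ :=
  (∫ y in S ∩ A, f y ∂μ) / ∫ y in A, f y ∂μ

theorem conditionedProb_le_one (hf : 0 ≤ᵐ[μ.restrict A] f) (hf_int : IntegrableOn f A μ) :
    conditionedProb μ f A S ≤ 1 :=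
  div_le_one_of_le₀ (setIntegral_mono_set hf_int hf Set.inter_subset_right.eventuallyLE)
    (integral_nonneg_of_ae hf)

theorem setIntegral_le_conditionedProb (hf : 0 ≤ᵐ[μ.restrict A] f)
    (hA_pos : 0 < ∫ y in A, f y ∂μ) (hA_le : ∫ y in A, f y ∂μ ≤ 1) (hT : T ⊆ S ∩ A) :
    ∫ y in T, f y ∂μ ≤ conditionedProb μ f A S := by
  have hf_inter : 0 ≤ᵐ[μ.restrict (S ∩ A)] f := ae_restrict_of_ae_restrict_of_subset
    Set.inter_subset_right hf
  have hf_int : IntegrableOn f A μ := .of_integral_ne_zero hA_pos.ne'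
  calc ∫ y in T, f y ∂μ
      ≤ ∫ y in S ∩ A, f y ∂μ :=
        setIntegral_mono_set (hf_int.mono_set Set.inter_subset_right) hf_inter hT.eventuallyLE
    _ ≤ conditionedProb μ f A S :=
        le_div_self (integral_nonneg_of_ae hf_inter) hA_pos hA_le

end ConditionedProb

theorem mul_measureReal_sub_mul_setIntegral_le_setIntegral {Y : Type*} [MeasurableSpace Y]
    {μ : Measure Y} {f g : Y → ℝ} {s : Set Y} {a b : ℝ} (hs : MeasurableSet s) (hμs : μ s ≠ ⊤)
    (hf : IntegrableOn f s μ) (hg : IntegrableOn g s μ) (hfg : ∀ y ∈ s, a - b * g y ≤ f y) :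
    a * μ.real s - b * ∫ y in s, g y ∂μ ≤ ∫ y in s, f y ∂μ := by
  have ha : IntegrableOn (fun _ ↦ a) s μ := integrableOn_const hμs
  calc a * μ.real s - b * ∫ y in s, g y ∂μ
      = ∫ y in s, (a - b * g y) ∂μ := by
        rw [integral_sub ha (hg.const_mul b), integral_const_mul, setIntegral_const, smul_eq_mul,
          mul_comm a]
    _ ≤ ∫ y in s, f y ∂μ := setIntegral_mono_on (ha.sub (hg.const_mul b)) hf hs hfg

section Ball

variable {Y : Type*} [PseudoMetricSpace Y] {y₀ : Y}

theorem integrableOn_dist_ball [MeasurableSpace Y] [OpensMeasurableSpace Y] {μ : Measure Y}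
    {r : ℝ} (hμ : μ (Metric.ball y₀ r) ≠ ⊤) :
    IntegrableOn (fun y ↦ dist y₀ y) (Metric.ball y₀ r) μ := by
  refine Measure.integrableOn_of_bounded (M := r) hμ
    (continuous_const.dist continuous_id).measurable.aestronglyMeasurable ?_
  filter_upwards [ae_restrict_mem Metric.isOpen_ball.measurableSet] with y hy
  rw [Real.norm_of_nonneg dist_nonneg]
  exact (Metric.mem_ball'.mp hy).le

theorem ball_min_div_subset_setOf_lt {f : Y → ℝ} {β δ c r : ℝ} (hβ : 0 < β)
    (hf : ∀ y, dist y₀ y < r → f y - f y₀ ≤ β * dist y₀ y) (hc : f y₀ ≤ c - δ) :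
    Metric.ball y₀ (min r (δ / β)) ⊆ {y | f y < c} := by
  intro y hy
  obtain ⟨hyr, hyδ⟩ := lt_min_iff.mp (Metric.mem_ball'.mp hy)
  have hβy : β * dist y₀ y < δ := (lt_div_iff₀' hβ).mp hyδ
  have hfy := hf y hyr
  change f y < c
  linarith

end Ball

theorem anti_naf_infringement_lower_bound_general
    {Y : Type*} [PseudoMetricSpace Y] [MeasurableSpace Y] [OpensMeasurableSpace Y]
    {μ : Measure Y} {y_C : Y} {Y_C : Set Y} {X : Type*} {p ρ : X → Y → ℝ} {k : X → ℝ}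
    {η δ ε_p α ε_t β ε_c : ℝ} (hp_nonneg : ∀ x, 0 ≤ᵐ[μ] p x) (hp_int : ∀ x, ∫ y, p x y ∂μ = 1)
    (hβ : 0 < β) (hsub : Metric.ball y_C ε_c ⊆ Y_C)
    (hμ : μ (Metric.ball y_C (min (min ε_p ε_c) (min ε_t (δ / β)))) ≠ ⊤) {x : X}
    (hp_loc : ∀ y, dist y_C y < ε_p → p x y_C - p x y ≤ α * dist y_C y)
    (hρ_loc : ∀ y, dist y_C y < ε_t → ρ x y - ρ x y_C ≤ β * dist y_C y)
    (hη : η ≤ p x y_C) (hδ : ρ x y_C ≤ k x - δ) (hpos : 0 < ∫ y in {y | ρ x y < k x}, p x y ∂μ) :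
    let B : Set Y := Metric.ball y_C (min (min ε_p ε_c) (min ε_t (δ / β)))
    let bound : ℝ := η * μ.real B - α * ∫ y in B, dist y_C y ∂μ
    bound ≤ conditionedProb μ (p x) {y | ρ x y < k x} Y_C ∧
      bound ≤ sSup {r | ∃ x₁, r = conditionedProb μ (p x₁) {y | ρ x₁ y < k x₁} Y_C} := by
  intro B bound
  have hp : ∀ x, Integrable (p x) μ := fun x ↦
    .of_integral_ne_zero ((hp_int x).trans_ne one_ne_zero)
  have hBp : ∀ y ∈ B, η - α * dist y_C y ≤ p x y := fun y hy ↦ by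
    have hyp : dist y_C y < ε_p :=
      (Metric.mem_ball'.mp hy).trans_le ((min_le_left _ _).trans (min_le_left _ _))
    linarith [hp_loc y hyp]
  have hB : B ⊆ Y_C ∩ {y | ρ x y < k x} := Set.subset_inter
    ((Metric.ball_subset_ball ((min_le_left _ _).trans (min_le_right _ _))).trans hsub)
    ((Metric.ball_subset_ball (min_le_right _ _)).trans
      (ball_min_div_subset_setOf_lt hβ hρ_loc hδ))
  have hbound : bound ≤ conditionedProb μ (p x) {y | ρ x y < k x} Y_C :=
    (mul_measureReal_sub_mul_setIntegral_le_setIntegral Metric.isOpen_ball.measurableSet hμ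
      (hp x).integrableOn (integrableOn_dist_ball hμ) hBp).trans <|
    setIntegral_le_conditionedProb (ae_restrict_of_ae (hp_nonneg x)) hpos
      ((setIntegral_le_integral (hp x) (hp_nonneg x)).trans_eq (hp_int x)) hB
  refine ⟨hbound, hbound.trans (le_csSup ⟨1, ?_⟩ ⟨x, rfl⟩)⟩
  rintro _ ⟨x₁, rfl⟩
  exact conditionedProb_le_one (ae_restrict_of_ae (hp_nonneg x₁)) (hp x₁).integrableOn

/-- **Theorem 2 (Anti-NAF lower bound).** For the CP-k protected model (the
density `p (x, ·)` conditioned on the acceptance event `{y | ρ x y < k x}`),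
every adversarial prompt `x ∈ X̃` (density at the target at least `η`, score at
the target below the threshold by a margin `δ`) yields infringement probability
at least `η * C₁ - α * C₂`; in particular the supremum over all prompts of the
infringement probability is at least this value. -/
theorem anti_naf_infringement_lower_bound
    {Y : Type*} [MetricSpace Y] [MeasurableSpace Y] [OpensMeasurableSpace Y]
    (μ : Measure Y) (y_C : Y) (Y_C : Set Y) (hY_C : MeasurableSet Y_C)
    {X : Type*}
    (p : X → Y → ℝ) (hp_meas : ∀ x, Measurable (p x))
    (hp_nonneg : ∀ x y, 0 ≤ p x y)
    (hp_int : ∀ x, ∫ y, p x y ∂μ = 1)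
    (ρ : X → Y → ℝ) (hρ_meas : ∀ x, Measurable (ρ x))
    (k : X → ℝ)
    (η δ : ℝ) (hη : 0 < η) (hδ : 0 < δ)
    (ε_p α : ℝ) (hε_p : 0 < ε_p) (hα : 0 < α)
    (hp_loc : ∀ x, ∀ y, dist y_C y < ε_p → |p x y_C - p x y| ≤ α * dist y_C y)
    (ε_t β : ℝ) (hε_t : 0 < ε_t) (hβ : 0 < β)
    (hρ_loc : ∀ x, ∀ y, dist y_C y < ε_t → |ρ x y_C - ρ x y| ≤ β * dist y_C y)
    (ε_c : ℝ) (hε_c : 0 < ε_c) (hsub : Metric.ball y_C ε_c ⊆ Y_C) :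
    let Xt : Set X := {x | η ≤ p x y_C ∧ ρ x y_C < k x - δ}
    let ε : ℝ := min (min ε_p ε_c) (min ε_t (δ / β))
    let B : Set Y := Metric.ball y_C ε
    let C₁ : ℝ := (μ B).toReal
    let C₂ : ℝ := ∫ y in B, dist y_C y ∂μ
    μ B < ⊤ →
    IntegrableOn (fun y => dist y_C y) B μ →
    ((∀ x ∈ Xt,
        0 < ∫ y in {y | ρ x y < k x}, p x y ∂μ →
        (∫ y in Y_C ∩ {y | ρ x y < k x}, p x y ∂μ)
            / (∫ y in {y | ρ x y < k x}, p x y ∂μ)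
          ≥ η * C₁ - α * C₂) ∧
      (∀ x₀ ∈ Xt,
        0 < ∫ y in {y | ρ x₀ y < k x₀}, p x₀ y ∂μ →
        sSup {r : ℝ | ∃ x : X,
            r = (∫ y in Y_C ∩ {y | ρ x y < k x}, p x y ∂μ)
                  / (∫ y in {y | ρ x y < k x}, p x y ∂μ)}
          ≥ η * C₁ - α * C₂)) := by
  intro Xt ε B C₁ C₂ hB _
  have key := fun x (hx : x ∈ Xt) ↦ anti_naf_infringement_lower_bound_general
    (fun x ↦ .of_forall (hp_nonneg x)) hp_int hβ hsub hB.ne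
    (fun y hy ↦ (abs_sub_le_iff.mp (hp_loc x y hy)).1)
    (fun y hy ↦ (abs_sub_le_iff.mp (hρ_loc x y hy)).2) hx.1 hx.2.le
  exact ⟨fun x hx hpos ↦ (key x hx hpos).1, fun x hx hpos ↦ (key x hx hpos).2⟩
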